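/- arXiv:1612.05684 — 2 statements merged into one kernel-verified Lean document; each statement's English description precedes it below -/
import Mathlib

section
/- Global optimality from a critical point of the perturbed dual (Theorem 3, optimality part): let a_e > 0 for all e, σ : Fin n → ℝ with σ_e > 0 for all e, and ς ≥ 0. Define ρ_e = τ_e(σ,ς)/(2σ_e). If ρ_e ∈ {0,1} for all e and the stationarity condition in ς holds, i.e. ∑_e a_e ρ_e = V_c, then ρ is a global minimizer of P(ρ') = −∑_e c_e ρ'_e over all binary vectors ρ' ∈ {0,1}^n with ∑_e a_e ρ'_e ≤ V_c. -/
/-!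
Relaxing the capacity constraint with the multiplier `ς` and adding the perturbation
`∑ e, σ e * (x e ^ 2 - x e)` turns the knapsack objective into a convex quadratic, whose
unconstrained minimizer is `x e = τ e / (2 * σ e)`. The perturbation is nonpositive on the unit box
and vanishes at binary vectors, so a binary minimizer of the quadratic also minimizes the Lagrangian
over the box; complementary slackness then removes the multiplier term.
-/

theorem isMinOn_inter_of_isMinOn_lagrangian {X R : Type*} [CommRing R] [PartialOrder R]
    [IsOrderedRing R] {f g : X → R} {S : Set X} {b μ : R} {x : X} (hμ : 0 ≤ μ)
    (hslack : μ * (g x - b) = 0) (hmin : IsMinOn (fun y => f y + μ * (g y - b)) S x) :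
    IsMinOn f (S ∩ {y | g y ≤ b}) x := by
  rintro y ⟨hyS, hyb⟩
  calc
    f x = f x + μ * (g x - b) := by rw [hslack, add_zero]
    _ ≤ f y + μ * (g y - b) := hmin hyS
    _ ≤ f y := add_le_of_nonpos_right (mul_nonpos_of_nonneg_of_nonpos hμ (sub_nonpos.mpr hyb))

section CommRing

variable {ι R : Type*} [Fintype ι] [CommRing R]

/-- The Lagrangian of the knapsack problem with profits `c`, weights `a` and capacity `V`, as a
minimization problem, in which the multiplier `ς` prices the capacity constraint. -/
def knapsackLagrangian (c a : ι → R) (V ς : R) (x : ι → R) : R :=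
  -∑ e, c e * x e + ς * (∑ e, a e * x e - V)

/-- The knapsack Lagrangian perturbed by the quadratic terms of the binary constraints
`x e ^ 2 - x e = 0` with multipliers `σ e`; its stationary point in `x` is `τ e / (2 * σ e)`. -/
def perturbedKnapsackLagrangian (c a : ι → R) (V ς : R) (σ x : ι → R) : R :=
  knapsackLagrangian c a V ς x + ∑ e, σ e * (x e ^ 2 - x e)

variable {c a σ x : ι → R} {V ς : R}

theorem perturbedKnapsackLagrangian_eq_add_sum_sq
    (hx : ∀ e, 2 * σ e * x e = σ e - ς * a e + c e) (y : ι → R) :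
    perturbedKnapsackLagrangian c a V ς σ y =
      perturbedKnapsackLagrangian c a V ς σ x + ∑ e, σ e * (y e - x e) ^ 2 := by
  have hterm (e : ι) : σ e * (y e - x e) ^ 2 =
      -(c e * y e - c e * x e) + ς * (a e * y e - a e * x e) +
        (σ e * (y e ^ 2 - y e) - σ e * (x e ^ 2 - x e)) := by
    linear_combination (x e - y e) * hx e
  simp only [perturbedKnapsackLagrangian, knapsackLagrangian, hterm, Finset.sum_add_distrib,
    Finset.sum_neg_distrib, ← Finset.mul_sum, Finset.sum_sub_distrib]
  ring

theorem perturbedKnapsackLagrangian_eq_of_binary (hx : ∀ e, x e = 0 ∨ x e = 1) :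
    perturbedKnapsackLagrangian c a V ς σ x = knapsackLagrangian c a V ς x := by
  have hpenalty (e : ι) : σ e * (x e ^ 2 - x e) = 0 := by
    rcases hx e with h | h <;> simp [h]
  simp only [perturbedKnapsackLagrangian, hpenalty, Finset.sum_const_zero, add_zero]

end CommRing

section LinearOrder

variable {ι K : Type*} [Fintype ι] {c a σ x ρ : ι → K} {V ς : K}

section OrderedRing

variable [CommRing K] [LinearOrder K] [IsStrictOrderedRing K]

theorem perturbedKnapsackLagrangian_le_of_mem_Icc (hσ : ∀ e, 0 ≤ σ e)
    (hx : x ∈ Set.Icc (0 : ι → K) 1) :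
    perturbedKnapsackLagrangian c a V ς σ x ≤ knapsackLagrangian c a V ς x := by
  refine add_le_of_nonpos_right (Finset.sum_nonpos fun e _ => ?_)
  exact mul_nonpos_of_nonneg_of_nonpos (hσ e)
    (sub_nonpos.mpr (pow_le_of_le_one (hx.1 e) (hx.2 e) two_ne_zero))

theorem isMinOn_perturbedKnapsackLagrangian (hσ : ∀ e, 0 ≤ σ e)
    (hρ : ∀ e, 2 * σ e * ρ e = σ e - ς * a e + c e) :
    IsMinOn (perturbedKnapsackLagrangian c a V ς σ) Set.univ ρ := by
  refine isMinOn_univ_iff.mpr fun y => ?_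
  rw [perturbedKnapsackLagrangian_eq_add_sum_sq hρ y]
  exact le_add_of_nonneg_right
    (Finset.sum_nonneg fun e _ => mul_nonneg (hσ e) (sq_nonneg (y e - ρ e)))

theorem isMinOn_knapsackLagrangian_of_binary (hσ : ∀ e, 0 ≤ σ e)
    (hρ : ∀ e, 2 * σ e * ρ e = σ e - ς * a e + c e) (hbin : ∀ e, ρ e = 0 ∨ ρ e = 1) :
    IsMinOn (knapsackLagrangian c a V ς) (Set.Icc 0 1) ρ := fun y hy =>
  calc
    knapsackLagrangian c a V ς ρ = perturbedKnapsackLagrangian c a V ς σ ρ :=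
      (perturbedKnapsackLagrangian_eq_of_binary hbin).symm
    _ ≤ perturbedKnapsackLagrangian c a V ς σ y :=
      isMinOn_perturbedKnapsackLagrangian hσ hρ (Set.mem_univ y)
    _ ≤ knapsackLagrangian c a V ς y := perturbedKnapsackLagrangian_le_of_mem_Icc hσ hy

end OrderedRing

theorem global_optimality_from_critical_point_general [Field K] [LinearOrder K]
    [IsStrictOrderedRing K] (hσ : ∀ e, 0 < σ e) (hς : 0 ≤ ς)
    (hdef : ∀ e, ρ e = (σ e - ς * a e + c e) / (2 * σ e))
    (hbin : ∀ e, ρ e = 0 ∨ ρ e = 1) (hslack : ς * (∑ e, a e * ρ e - V) = 0) :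
    IsMinOn (fun x => -∑ e, c e * x e) (Set.Icc 0 1 ∩ {x | ∑ e, a e * x e ≤ V}) ρ := by
  have hcrit (e : ι) : 2 * σ e * ρ e = σ e - ς * a e + c e := by
    rw [hdef e, mul_div_cancel₀ _ (mul_pos two_pos (hσ e)).ne']
  exact isMinOn_inter_of_isMinOn_lagrangian hς hslack
    (isMinOn_knapsackLagrangian_of_binary (fun e => (hσ e).le) hcrit hbin)

end LinearOrder

theorem mem_Icc_zero_one_of_binary {ι R : Type*} [Semiring R] [PartialOrder R] [ZeroLEOneClass R]
    {x : ι → R} (hx : ∀ e, x e = 0 ∨ x e = 1) : x ∈ Set.Icc (0 : ι → R) 1 := by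
  constructor <;> intro e <;> rcases hx e with h | h <;> simp [h]

/-- Global optimality from a critical point of the perturbed dual
(Theorem 3, optimality part). -/
theorem global_optimality_from_critical_point (n : ℕ) (c a : Fin n → ℝ) (Vc : ℝ)
    (ha : ∀ e, 0 < a e)
    (σ : Fin n → ℝ) (hσ : ∀ e, 0 < σ e) (ς : ℝ) (hς : 0 ≤ ς)
    (ρ : Fin n → ℝ)
    (hdef : ∀ e, ρ e = (σ e - ς * a e + c e) / (2 * σ e))
    (hbin : ∀ e, ρ e = 0 ∨ ρ e = 1)
    (hstat : ∑ e, a e * ρ e = Vc) :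
    ∀ ρ' : Fin n → ℝ, (∀ e, ρ' e = 0 ∨ ρ' e = 1) → ∑ e, a e * ρ' e ≤ Vc →
      -∑ e, c e * ρ e ≤ -∑ e, c e * ρ' e := by
  intro ρ' hbin' hfeas
  exact global_optimality_from_critical_point_general hσ hς hdef hbin (by simp [hstat])
    ⟨mem_Icc_zero_one_of_binary hbin', hfeas⟩
end

section
/- Weak duality for the perturbed dual: for every β > 0, every binary vector ρ ∈ {0,1}^n with ∑_e a_e ρ_e ≤ V_c, and every (σ, ς) with σ_e > 0 for all e and ς ≥ 0, one has P^d_β(σ, ς) ≤ P^d(σ, ς) ≤ −∑_e c_e ρ_e. -/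
/-!
For `σ > 0` the dual function is the minimum over all `ρ` of the total complementary function
`Ξ(ρ, σ, ς) = ∑ₑ (σₑ ρₑ² - (σₑ - ς aₑ + cₑ) ρₑ) - ς V`, attained at
`ρₑ = (σₑ - ς aₑ + cₑ) / (2 σₑ)`. Regrouped as
`Ξ = -∑ₑ cₑ ρₑ + ∑ₑ σₑ (ρₑ² - ρₑ) + ς (∑ₑ aₑ ρₑ - V)`, it is the Lagrangian of the primal problem,
so for `ς ≥ 0` it lies below the primal objective wherever `ρₑ² ≤ ρₑ` and `∑ₑ aₑ ρₑ ≤ V`. The first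
constraint says `ρₑ ∈ [0, 1]`, so the dual bounds even the continuous relaxation.
-/

section CanonicalDuality

variable {𝕜 ι : Type*} [Field 𝕜] [Fintype ι]

/-- The canonical dual function `P^d(σ, ς)` of the knapsack problem: minimize `-∑ e, c e * ρ e` over
binary `ρ` with `∑ e, a e * ρ e ≤ V`. Meaningful where every `σ e` is nonzero. -/
def canonicalDual (c a : ι → 𝕜) (V : 𝕜) (σ : ι → 𝕜) (ς : 𝕜) : 𝕜 :=
  -(1 / 4) * ∑ e, (σ e - ς * a e + c e) ^ 2 / σ e - ς * V

/-- The `β`-perturbed dual function `P^d_β(σ, ς)`, which penalizes the multipliers `σ`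
quadratically. Meaningful for nonzero `β`. -/
def perturbedDual (c a : ι → 𝕜) (V β : 𝕜) (σ : ι → 𝕜) (ς : 𝕜) : 𝕜 :=
  canonicalDual c a V σ ς - 1 / (4 * β) * ∑ e, σ e ^ 2

/-- Gao and Strang's total complementary function `Ξ(ρ, σ, ς)`, which links the primal problem to
its canonical dual. -/
def totalComplementary (c a : ι → 𝕜) (V : 𝕜) (ρ σ : ι → 𝕜) (ς : 𝕜) : 𝕜 :=
  ∑ e, (σ e * ρ e ^ 2 - (σ e - ς * a e + c e) * ρ e) - ς * V

theorem totalComplementary_eq_lagrangian (c a : ι → 𝕜) (V : 𝕜) (ρ σ : ι → 𝕜) (ς : 𝕜) :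
    totalComplementary c a V ρ σ ς =
      -∑ e, c e * ρ e + ∑ e, σ e * (ρ e ^ 2 - ρ e) + ς * (∑ e, a e * ρ e - V) := by
  rw [totalComplementary, mul_sub, Finset.mul_sum, ← Finset.sum_neg_distrib, ← add_sub_assoc,
    ← Finset.sum_add_distrib, ← Finset.sum_add_distrib]
  congr 1
  exact Finset.sum_congr rfl fun e _ ↦ by ring

variable [LinearOrder 𝕜] [IsStrictOrderedRing 𝕜]

theorem neg_quarter_mul_sq_div_le {s : 𝕜} (hs : 0 < s) (t x : 𝕜) :
    -(1 / 4) * (t ^ 2 / s) ≤ s * x ^ 2 - t * x := by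
  have complete_square :
      s * x ^ 2 - t * x - -(1 / 4) * (t ^ 2 / s) = s * (x - t / (2 * s)) ^ 2 := by
    field_simp
    ring
  rw [← sub_nonneg, complete_square]
  positivity

variable {c a ρ σ : ι → 𝕜} {V β ς : 𝕜}

theorem canonicalDual_le_totalComplementary (hσ : ∀ e, 0 < σ e) (ρ : ι → 𝕜) :
    canonicalDual c a V σ ς ≤ totalComplementary c a V ρ σ ς := by
  rw [canonicalDual, totalComplementary, Finset.mul_sum]
  gcongr with e
  exact neg_quarter_mul_sq_div_le (hσ e) _ (ρ e)

theorem totalComplementary_le_neg_sum (hρ : ∀ e, ρ e ∈ Set.Icc 0 1)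
    (hfeas : ∑ e, a e * ρ e ≤ V) (hσ : ∀ e, 0 ≤ σ e) (hς : 0 ≤ ς) :
    totalComplementary c a V ρ σ ς ≤ -∑ e, c e * ρ e := by
  have box_penalty : ∑ e, σ e * (ρ e ^ 2 - ρ e) ≤ 0 :=
    Finset.sum_nonpos fun e _ ↦ mul_nonpos_of_nonneg_of_nonpos (hσ e) <|
      sub_nonpos.mpr (pow_le_of_le_one (hρ e).1 (hρ e).2 two_ne_zero)
  have capacity_penalty : ς * (∑ e, a e * ρ e - V) ≤ 0 :=
    mul_nonpos_of_nonneg_of_nonpos hς (sub_nonpos.mpr hfeas)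
  rw [totalComplementary_eq_lagrangian]
  linarith

theorem canonicalDual_le_neg_sum (hρ : ∀ e, ρ e ∈ Set.Icc 0 1)
    (hfeas : ∑ e, a e * ρ e ≤ V) (hσ : ∀ e, 0 < σ e) (hς : 0 ≤ ς) :
    canonicalDual c a V σ ς ≤ -∑ e, c e * ρ e :=
  (canonicalDual_le_totalComplementary hσ ρ).trans <|
    totalComplementary_le_neg_sum hρ hfeas (fun e ↦ (hσ e).le) hς

theorem perturbedDual_le_canonicalDual (hβ : 0 < β) :
    perturbedDual c a V β σ ς ≤ canonicalDual c a V σ ς :=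
  sub_le_self _ (by positivity)

theorem perturbed_weak_duality_general (hβ : 0 < β) (hρ : ∀ e, ρ e ∈ Set.Icc 0 1)
    (hfeas : ∑ e, a e * ρ e ≤ V) (hσ : ∀ e, 0 < σ e) (hς : 0 ≤ ς) :
    perturbedDual c a V β σ ς ≤ canonicalDual c a V σ ς ∧
      canonicalDual c a V σ ς ≤ -∑ e, c e * ρ e :=
  ⟨perturbedDual_le_canonicalDual hβ, canonicalDual_le_neg_sum hρ hfeas hσ hς⟩

end CanonicalDuality

/-- Weak duality for the perturbed dual. -/
theorem perturbed_weak_duality (n : ℕ) (c a : Fin n → ℝ) (Vc : ℝ)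
    (β : ℝ) (hβ : 0 < β)
    (ρ : Fin n → ℝ) (hbin : ∀ e, ρ e = 0 ∨ ρ e = 1)
    (hfeas : ∑ e, a e * ρ e ≤ Vc)
    (σ : Fin n → ℝ) (hσ : ∀ e, 0 < σ e) (ς : ℝ) (hς : 0 ≤ ς) :
    ((-(1/4) * ∑ e, (σ e - ς * a e + c e)^2 / σ e - ς * Vc)
        - (1/(4*β)) * ∑ e, (σ e)^2
      ≤ -(1/4) * ∑ e, (σ e - ς * a e + c e)^2 / σ e - ς * Vc) ∧
    (-(1/4) * ∑ e, (σ e - ς * a e + c e)^2 / σ e - ς * Vc ≤ -∑ e, c e * ρ e) := by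
  have hρ (e : Fin n) : ρ e ∈ Set.Icc 0 1 := by rcases hbin e with h | h <;> simp [h]
  exact perturbed_weak_duality_general hβ hρ hfeas hσ hς
end
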